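/- The series ∑_{n=1}^∞ L_n(1)/n converges and its sum equals -γ, where γ is the Euler–Mascheroni constant. -/

import Mathlib

/-- The value of the `n`-th Laguerre polynomial at `1`:
`L_n(1) = ∑_{k=0}^n C(n,k) (-1)^k / k!`. -/
noncomputable def laguerreOne (n : ℕ) : ℝ :=
  ∑ k ∈ Finset.range (n + 1), (Nat.choose n k : ℝ) * (-1) ^ k / (Nat.factorial k : ℝ)

/-!
For `x > 0`, the recurrence `n (L_n - L_{n-1}) = -x A_n` for the partial sums
`A_n = L_0 + ⋯ + L_{n-1}` of `L_n = L_n(x)` yields an energy, quadratic in `L_n` and `A_n`, that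
stays bounded. Hence `A_n = O(√n)`, and summation by parts gives convergence of `∑ L_n / n`. By
Abel's limit theorem its sum is the limit as `t → 1⁻` of `∑ L_n tⁿ / n`, which an Euler transform
evaluates as `-log (1 - t) - Ein (x t / (1 - t))`, where `Ein u = ∫₀ᵘ (1 - e⁻ˢ) / s ds`. Integrating
by parts and using `∫₀^∞ e⁻ˢ log s ds = Γ'(1) = -γ`, one finds `Ein u - log u → γ` as `u → ∞`, so
the sum is `-γ - log x`.
-/

open Asymptotics Filter Finset MeasureTheory Real Set
open scoped Nat Topology

local notation "γ" => Real.eulerMascheroniConstant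

theorem hasSum_choose_mul_pow {𝕜 : Type*} [RCLike 𝕜] {t : 𝕜} (ht : ‖t‖ < 1) (k : ℕ) :
    HasSum (fun n : ℕ => (n.choose k : 𝕜) * t ^ n) ((1 - t)⁻¹ * (t / (1 - t)) ^ k) := by
  have hshift := (hasSum_choose_mul_geometric_of_norm_lt_one k ht).mul_left (t ^ k)
  rw [← (add_left_injective k).hasSum_iff]
  · convert! hshift using 1
    · ext n
      rw [Function.comp, pow_add]
      ring
    · rw [div_pow, inv_mul_eq_div, div_div, ← pow_succ, mul_one_div]
  · intro n hn
    have hnk : n < k := by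
      by_contra! hkn
      exact hn ⟨n - k, Nat.sub_add_cancel hkn⟩
    simp [Nat.choose_eq_zero_of_lt hnk]

theorem hasSum_eulerTransform {𝕜 : Type*} [RCLike 𝕜] {c : ℕ → 𝕜} {t : 𝕜} (ht : ‖t‖ < 1)
    (hc : Summable fun k => ‖c k‖ * (‖t‖ / (1 - ‖t‖)) ^ k) :
    HasSum (fun n => (∑ k ∈ range (n + 1), (n.choose k : 𝕜) * c k) * t ^ n)
      ((1 - t)⁻¹ * ∑' k, c k * (t / (1 - t)) ^ k) := by
  let F : ℕ × ℕ → 𝕜 := fun p => c p.1 * ((p.2.choose p.1 : 𝕜) * t ^ p.2)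
  have hrow (k : ℕ) : HasSum (fun n => F (k, n)) ((1 - t)⁻¹ * (c k * (t / (1 - t)) ^ k)) := by
    rw [mul_left_comm]
    exact (hasSum_choose_mul_pow ht k).mul_left (c k)
  have hrow_norm (k : ℕ) :
      HasSum (fun n => ‖F (k, n)‖) ((1 - ‖t‖)⁻¹ * (‖c k‖ * (‖t‖ / (1 - ‖t‖)) ^ k)) := by
    rw [mul_left_comm]
    simpa [F] using! (hasSum_choose_mul_pow (t := ‖t‖) (by simpa using ht) k).mul_left ‖c k‖
  have hcol (n : ℕ) :
      HasSum (fun k => F (k, n)) ((∑ k ∈ range (n + 1), (n.choose k : 𝕜) * c k) * t ^ n) := by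
    have hzero : ∀ k ∉ range (n + 1), F (k, n) = 0 := fun k hk => by
      simp [F, Nat.choose_eq_zero_of_lt (by simpa using hk : n < k)]
    have hterm : (∑ k ∈ range (n + 1), (n.choose k : 𝕜) * c k) * t ^ n =
        ∑ k ∈ range (n + 1), F (k, n) := by
      rw [sum_mul]
      exact sum_congr rfl fun k _ => by ring
    exact hterm ▸ hasSum_sum_of_ne_finset_zero hzero
  have hF : Summable F := by
    refine .of_norm ((summable_prod_of_nonneg fun _ => norm_nonneg _).2
      ⟨fun k => (hrow_norm k).summable, ?_⟩)
    simpa only [(hrow_norm _).tsum_eq] using hc.mul_left _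
  have hsum : HasSum F ((1 - t)⁻¹ * ∑' k, c k * (t / (1 - t)) ^ k) := by
    rw [← tsum_mul_left, (hF.hasSum.prod_fiberwise hrow).tsum_eq]
    exact hF.hasSum
  exact ((Equiv.prodComm ℕ ℕ).hasSum_iff.2 hsum).prod_fiberwise hcol

theorem isBigO_inv_sub_one_sub_inv :
    (fun n : ℕ => (n - 1 : ℝ)⁻¹ - (n : ℝ)⁻¹) =O[atTop] fun n : ℕ => (n : ℝ) ^ (-2 : ℝ) := by
  refine .of_bound 2 ?_
  filter_upwards [eventually_ge_atTop 2] with n hn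
  have hn' : (2 : ℝ) ≤ n := mod_cast hn
  have hn1 : (0 : ℝ) < n - 1 := by linarith
  have hdiff : (n - 1 : ℝ)⁻¹ - (n : ℝ)⁻¹ = 1 / ((n - 1) * n) := by
    field_simp
    ring
  rw [hdiff, norm_of_nonneg (by positivity), norm_of_nonneg (by positivity),
    rpow_neg (by positivity), rpow_two, ← div_eq_mul_inv,
    div_le_div_iff₀ (by positivity) (by positivity)]
  nlinarith

theorem exists_tendsto_sum_inv_smul_of_isBigO_rpow {E : Type*} [NormedAddCommGroup E]
    [NormedSpace ℝ E] [CompleteSpace E] {a : ℕ → E} {r : ℝ} (hr : r < 1)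
    (ha : (fun n => ∑ k ∈ range n, a k) =O[atTop] fun n : ℕ => (n : ℝ) ^ r) :
    ∃ S, Tendsto (fun N => ∑ n ∈ range N, (n : ℝ)⁻¹ • a n) atTop (𝓝 S) := by
  set A : ℕ → E := fun n => ∑ k ∈ range n, a k
  let b : ℕ → E := fun n => ((n - 1 : ℝ)⁻¹ - (n : ℝ)⁻¹) • A n
  have hparts (N : ℕ) :
      ∑ n ∈ range N, (n : ℝ)⁻¹ • a n = (N : ℝ)⁻¹ • A N + ∑ n ∈ range (N + 1), b n := by
    induction N with
    | zero => simp [A, b]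
    | succ N ih =>
      have hA : A (N + 1) = A N + a N := sum_range_succ a N
      rw [sum_range_succ, sum_range_succ, ih]
      simp only [b, hA, Nat.cast_add_one, add_sub_cancel_right]
      module
  have hmean : (fun n : ℕ => (n : ℝ)⁻¹ • A n) =O[atTop] fun n : ℕ => (n : ℝ) ^ (-(1 - r)) := by
    refine ((isBigO_refl (fun n : ℕ => (n : ℝ)⁻¹) atTop).smul ha).congr' .rfl ?_
    filter_upwards [eventually_gt_atTop 0] with n hn
    rw [smul_eq_mul, ← rpow_neg_one, ← rpow_add (by positivity)]
    ring_nf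
  have hlim : Tendsto (fun n : ℕ => (n : ℝ)⁻¹ • A n) atTop (𝓝 0) :=
    hmean.trans_tendsto ((tendsto_rpow_neg_atTop (by linarith)).comp tendsto_natCast_atTop_atTop)
  have hb : Summable b := by
    refine summable_of_isBigO_nat (Real.summable_nat_rpow.2 (by linarith : -2 + r < -1)) ?_
    refine (isBigO_inv_sub_one_sub_inv.smul ha).congr' .rfl ?_
    filter_upwards [eventually_gt_atTop 0] with n hn
    rw [smul_eq_mul, ← rpow_add (by positivity)]
  have hbsum := (tendsto_add_atTop_iff_nat 1).2 hb.hasSum.tendsto_sum_nat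
  exact ⟨_, by simpa only [hparts] using hlim.add hbsum⟩

/-- The value `L_n(x)` of the `n`-th Laguerre polynomial, so that `laguerre n 1` is `laguerreOne n`
by definition. -/
noncomputable def laguerre (n : ℕ) (x : ℝ) : ℝ :=
  ∑ k ∈ range (n + 1), (n.choose k : ℝ) * (-x) ^ k / (k ! : ℝ)

theorem laguerre_eq_sum_range {n m : ℕ} (h : n < m) (x : ℝ) :
    laguerre n x = ∑ k ∈ range m, (n.choose k : ℝ) * (-x) ^ k / (k ! : ℝ) :=
  sum_subset (range_mono h) fun k _ hk => by
    simp [Nat.choose_eq_zero_of_lt (by simpa using hk : n < k)]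

theorem sum_range_succ_choose (n k : ℕ) :
    ∑ m ∈ range (n + 1), m.choose k = (n + 1).choose (k + 1) := by
  rw [← Nat.sum_Icc_choose]
  refine (sum_subset (fun m hm => ?_) fun m _ hm => Nat.choose_eq_zero_of_lt ?_).symm <;> grind

theorem choose_succ_div_succ (n k : ℕ) :
    ((n + 1).choose (k + 1) : ℝ) / (n + 1 : ℕ) = n.choose k / (k + 1 : ℕ) := by
  rw [div_eq_div_iff (by positivity) (by positivity), mul_comm (n.choose k : ℝ)]
  exact_mod_cast (Nat.add_one_mul_choose_eq n k).symm

theorem sum_range_succ_laguerre (n : ℕ) (x : ℝ) :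
    ∑ m ∈ range (n + 1), laguerre m x =
      ∑ k ∈ range (n + 1), ((n + 1).choose (k + 1) : ℝ) * (-x) ^ k / (k ! : ℝ) := by
  rw [sum_congr rfl fun m hm => laguerre_eq_sum_range (Finset.mem_range.1 hm) x, sum_comm]
  simp_rw [← sum_div, ← sum_mul, ← Nat.cast_sum, sum_range_succ_choose]

theorem laguerre_succ_eq_add_sum (n : ℕ) (x : ℝ) :
    laguerre (n + 1) x =
      laguerre n x +
        ∑ k ∈ range (n + 1), (n.choose k : ℝ) * (-x) ^ (k + 1) / ((k + 1) ! : ℝ) := by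
  rw [laguerre, laguerre_eq_sum_range (by omega : n < n + 1 + 1), sum_range_succ',
    sum_range_succ' _ (n + 1)]
  simp only [Nat.choose_succ_succ', Nat.cast_add, add_mul, add_div, sum_add_distrib,
    Nat.choose_zero_right]
  ring

theorem laguerre_succ (n : ℕ) (x : ℝ) :
    laguerre (n + 1) x =
      laguerre n x - x / (n + 1 : ℕ) * ∑ k ∈ range (n + 1), laguerre k x := by
  rw [laguerre_succ_eq_add_sum, sub_eq_add_neg, sum_range_succ_laguerre, ← neg_mul, mul_sum]
  congr 1
  refine sum_congr rfl fun k _ => ?_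
  rw [Nat.factorial_succ, Nat.cast_mul]
  linear_combination -(-x) ^ (k + 1) / (k ! : ℝ) * choose_succ_div_succ n k

/-- `L_n² + (x / n) A_n (A_n + L_n)`, where `A_n = L_0 + ⋯ + L_{n-1}`. Since `L_n' = -A_n`, this
is a discrete analogue of the energy `y² + x y'² / n` of Laguerre's differential equation. The mixed
term is chosen so that passing from `n` to `n + 1` only changes the factor `x / n`, see
`laguerreEnergy_succ`. -/
noncomputable def laguerreEnergy (n : ℕ) (x : ℝ) : ℝ :=
  laguerre n x ^ 2 +
    x / n * ((∑ k ∈ range n, laguerre k x) * (∑ k ∈ range (n + 1), laguerre k x))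

theorem laguerreEnergy_succ (n : ℕ) (x : ℝ) :
    laguerreEnergy (n + 1) x = laguerre n x ^ 2 + x / (n + 1 : ℕ) *
      ((∑ k ∈ range n, laguerre k x) * (∑ k ∈ range (n + 1), laguerre k x)) := by
  rw [laguerreEnergy, sum_range_succ _ (n + 1), laguerre_succ, sum_range_succ _ n]
  ring

theorem sq_add_mul_mul_add_nonneg {s : ℝ} (hs0 : 0 ≤ s) (hs4 : s ≤ 4) (a b : ℝ) :
    0 ≤ b ^ 2 + s * (a * (a + b)) := by
  linarith [mul_nonneg hs0 (sq_nonneg (2 * a + b)), mul_nonneg (sub_nonneg.2 hs4) (sq_nonneg b)]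

theorem laguerreEnergy_succ_le {n : ℕ} {x : ℝ} (hx : 0 < x) (hn : x ≤ n) :
    (1 + x / (n + 1 : ℕ)) * laguerreEnergy (n + 1) x ≤ (1 + x / n) * laguerreEnergy n x := by
  have hn0 : (0 : ℝ) < n := hx.trans_le hn
  rw [laguerreEnergy_succ, laguerreEnergy, sum_range_succ]
  set L := laguerre n x
  set A := ∑ k ∈ range n, laguerre k x
  set p := x / (n + 1 : ℕ)
  set q := x / n
  have hp : 0 < p := by positivity
  have hpq : p ≤ q := div_le_div_of_nonneg_left hx.le hn0 (by simp)
  have hq : q ≤ 1 := (div_le_one hn0).2 hn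
  -- the difference of the two sides is `(q - p)` times the following form
  have hform : 0 ≤ L ^ 2 + (1 + p + q) * (A * (A + L)) :=
    sq_add_mul_mul_add_nonneg (by linarith) (by linarith) A L
  linarith [mul_nonneg (sub_nonneg.2 hpq) hform]

theorem three_mul_div_mul_sq_sum_range_laguerre_le {n : ℕ} {x : ℝ} (hx : 0 ≤ x) (hn : x ≤ n) :
    3 * (x / n) * (∑ k ∈ range n, laguerre k x) ^ 2 ≤ 4 * laguerreEnergy n x := by
  have hq0 : 0 ≤ x / n := by positivity
  have hq1 : x / n ≤ 1 := div_le_one_of_le₀ hn n.cast_nonneg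
  rw [laguerreEnergy, sum_range_succ]
  set L := laguerre n x
  set A := ∑ k ∈ range n, laguerre k x
  -- with `q = x / n`, the difference of the two sides is `(2L + qA)² + q (1 - q) A²`
  linarith [sq_nonneg (2 * L + x / n * A),
    mul_nonneg (mul_nonneg hq0 (sub_nonneg.2 hq1)) (sq_nonneg A)]

theorem exists_eventually_laguerreEnergy_le {x : ℝ} (hx : 0 < x) :
    ∃ C, ∀ᶠ n in atTop, laguerreEnergy n x ≤ C := by
  set N := ⌈x⌉₊
  have hxN : ∀ n ≥ N, x ≤ n := fun n hn => (Nat.le_ceil x).trans (mod_cast hn)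
  have hanti : AntitoneOn (fun n : ℕ => (1 + x / n) * laguerreEnergy n x) (Ici N) :=
    antitoneOn_nat_Ici_of_succ_le fun n hn => laguerreEnergy_succ_le hx (hxN n hn)
  refine ⟨(1 + x / N) * laguerreEnergy N x, ?_⟩
  filter_upwards [eventually_ge_atTop N] with n hn
  have hnonneg : 0 ≤ laguerreEnergy n x := by
    have hsq := three_mul_div_mul_sq_sum_range_laguerre_le hx.le (hxN n hn)
    linarith [show 0 ≤ 3 * (x / n) * (∑ k ∈ range n, laguerre k x) ^ 2 by positivity]
  exact (le_mul_of_one_le_left hnonneg (le_add_of_nonneg_right (by positivity))).trans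
    (hanti self_mem_Ici hn hn)

theorem isBigO_sum_range_laguerre {x : ℝ} (hx : 0 < x) :
    (fun n => ∑ k ∈ range n, laguerre k x) =O[atTop] fun n : ℕ => (n : ℝ) ^ (1 / 2 : ℝ) := by
  obtain ⟨C, hC⟩ := exists_eventually_laguerreEnergy_le hx
  refine .of_pow two_ne_zero (.of_bound (4 * C / (3 * x)) ?_)
  filter_upwards [hC, eventually_ge_atTop ⌈x⌉₊, eventually_gt_atTop 0] with n hCn hn hn0
  have hsq := three_mul_div_mul_sq_sum_range_laguerre_le hx.le ((Nat.le_ceil x).trans (mod_cast hn))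
  simp only [Pi.pow_apply]
  rw [← sqrt_eq_rpow, sq_sqrt n.cast_nonneg, norm_of_nonneg (sq_nonneg _), Real.norm_natCast,
    div_mul_eq_mul_div, le_div_iff₀ (by positivity)]
  calc (∑ k ∈ range n, laguerre k x) ^ 2 * (3 * x)
      = 3 * (x / n) * (∑ k ∈ range n, laguerre k x) ^ 2 * n := by field_simp
    _ ≤ 4 * C * n := mul_le_mul_of_nonneg_right (by linarith) n.cast_nonneg

theorem integral_log_mul_exp_neg_Ioi : ∫ t in Ioi (0 : ℝ), log t * exp (-t) = -γ := by
  have hre : ∀ᶠ s : ℂ in 𝓝 1, 0 < s.re :=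
    (isOpen_lt continuous_const Complex.continuous_re).mem_nhds (by simp)
  have hderiv := ((Complex.hasDerivAt_GammaIntegral (s := 1) (by simp)).congr_of_eventuallyEq
    (hre.mono fun s hs => Complex.Gamma_eq_integral hs)).unique Complex.hasDerivAt_Gamma_one
  simp only [sub_self, Complex.cpow_zero, one_mul, ← Complex.ofReal_mul, ← Complex.ofReal_neg,
    integral_complex_ofReal] at hderiv
  exact_mod_cast hderiv

theorem integrableOn_log_mul_exp_neg_Ioi : IntegrableOn (fun t => log t * exp (-t)) (Ioi 0) := by
  -- the integral of a non-integrable function is `0`, whereas `-γ < 0`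
  refine not_imp_comm.1 integral_undef ?_
  rw [integral_log_mul_exp_neg_Ioi]
  linarith [one_half_lt_eulerMascheroniConstant]

theorem intervalIntegrable_log_mul_exp_neg (a b : ℝ) :
    IntervalIntegrable (fun t => log t * exp (-t)) volume a b :=
  intervalIntegral.intervalIntegrable_log'.mul_continuousOn (by fun_prop)

/-- The entire exponential integral `Ein(u) = ∫₀ᵘ (1 - e⁻ˢ) / s ds`, through which the generating
function of `L_n(x) / n` is expressed. The junk value of the integrand at `s = 0` is harmless. -/
noncomputable def ein (u : ℝ) : ℝ :=
  ∫ s in 0..u, (1 - exp (-s)) / s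

theorem hasSum_one_sub_exp_neg_div {s : ℝ} (hs : s ≠ 0) :
    HasSum (fun k : ℕ => (-s) ^ k / ((k + 1) ! : ℝ)) ((1 - exp (-s)) / s) := by
  have hexp := NormedSpace.expSeries_div_hasSum_exp (-s)
  rw [← exp_eq_exp_ℝ, ← hasSum_nat_add_iff' 1] at hexp
  convert! hexp.div_const (-s) using 1
  · ext k
    field_simp
    ring
  · rw [sum_range_one, pow_zero, Nat.factorial_zero, Nat.cast_one, div_one, div_neg, ← neg_div,
      neg_sub]

theorem hasSum_ein (u : ℝ) :
    HasSum (fun k : ℕ => -((-u) ^ (k + 1) / ((k + 1) * (k + 1) ! : ℝ))) (ein u) := by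
  have hbound (k : ℕ) {s : ℝ} (hs : s ∈ uIoc 0 u) :
      ‖(-s) ^ k / ((k + 1) ! : ℝ)‖ ≤ |u| ^ k / (k ! : ℝ) := by
    have hsu : |s| ≤ |u| := by
      simpa using abs_sub_left_of_mem_uIcc (uIoc_subset_uIcc hs)
    rw [norm_div, norm_pow, norm_neg, Real.norm_natCast, Real.norm_eq_abs]
    gcongr
    omega
  have hint : HasSum (fun k : ℕ => ∫ s in 0..u, (-s) ^ k / ((k + 1) ! : ℝ)) (ein u) := by
    refine intervalIntegral.hasSum_integral_of_dominated_convergence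
      (fun k _ => |u| ^ k / (k ! : ℝ)) (fun k => ?_) (fun k => .of_forall fun s => hbound k)
      (.of_forall fun _ _ => Real.summable_pow_div_factorial |u|) (by simp) ?_
    · exact Continuous.aestronglyMeasurable (by fun_prop)
    · filter_upwards [Measure.ae_ne volume 0] with s hs _
      exact hasSum_one_sub_exp_neg_div hs
  convert hint using 2 with k
  rw [intervalIntegral.integral_div, intervalIntegral.integral_comp_neg fun s => s ^ k,
    integral_pow]
  field_simp
  simp

theorem intervalIntegrable_one_sub_exp_neg_div (a b : ℝ) :
    IntervalIntegrable (fun s => (1 - exp (-s)) / s) volume a b := by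
  have hcont : Continuous (dslope (fun s => -exp (-s)) 0) := by
    rw [← continuousOn_univ, continuousOn_dslope univ_mem]
    exact ⟨by fun_prop, by fun_prop⟩
  refine (hcont.intervalIntegrable a b).congr_ae (ae_restrict_of_ae ?_)
  filter_upwards [Measure.ae_ne volume 0] with s hs
  rw [dslope_of_ne _ hs, slope_def_field, neg_zero, exp_zero, sub_zero, sub_neg_eq_add,
    neg_add_eq_sub]

theorem tendsto_one_sub_exp_neg_mul_log_zero :
    Tendsto (fun u => (1 - exp (-u)) * log u) (𝓝[>] 0) (𝓝 0) := by
  have hlog : Tendsto (fun u : ℝ => ‖log u * u‖) (𝓝[>] 0) (𝓝 0) := by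
    simpa using (tendsto_log_mul_rpow_nhdsGT_zero zero_lt_one).norm
  refine squeeze_zero_norm' ?_ hlog
  filter_upwards [self_mem_nhdsWithin] with u (hu : 0 < u)
  rw [mul_comm, norm_mul, norm_mul]
  gcongr
  rw [norm_of_nonneg (by simpa using hu.le), norm_of_nonneg hu.le]
  linarith [one_sub_le_exp_neg u]

theorem ein_eq_sub_integral {u : ℝ} (hu : 0 < u) :
    ein u = (1 - exp (-u)) * log u - ∫ s in 0..u, log s * exp (-s) := by
  have hderiv : ∀ s ∈ Ioo 0 u, HasDerivAt (fun s => (1 - exp (-s)) * log s)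
      (log s * exp (-s) + (1 - exp (-s)) / s) s := fun s hs => by
    convert! ((hasDerivAt_neg s).exp.const_sub 1).mul (hasDerivAt_log hs.1.ne') using 1
    ring
  have hcont : ContinuousAt (fun s => (1 - exp (-s)) * log s) u := by
    fun_prop (disch := exact hu.ne')
  have hftc := intervalIntegral.integral_eq_sub_of_hasDerivAt_of_tendsto hu hderiv
    ((intervalIntegrable_log_mul_exp_neg 0 u).add (intervalIntegrable_one_sub_exp_neg_div 0 u))
    tendsto_one_sub_exp_neg_mul_log_zero (hcont.tendsto.mono_left nhdsWithin_le_nhds)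
  rw [intervalIntegral.integral_add (intervalIntegrable_log_mul_exp_neg 0 u)
    (intervalIntegrable_one_sub_exp_neg_div 0 u)] at hftc
  rw [ein]
  linarith

theorem tendsto_ein_sub_log : Tendsto (fun u => ein u - log u) atTop (𝓝 γ) := by
  have hint := intervalIntegral_tendsto_integral_Ioi 0 integrableOn_log_mul_exp_neg_Ioi tendsto_id
  rw [integral_log_mul_exp_neg_Ioi] at hint
  have hexp : Tendsto (fun u => exp (-u) * log u) atTop (𝓝 0) := by
    have hlog : log =o[atTop] exp :=
      isLittleO_log_id_atTop.trans (by simpa using! isLittleO_pow_exp_atTop (n := 1))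
    simpa only [exp_neg, inv_mul_eq_div] using hlog.tendsto_div_nhds_zero
  have hlim := hexp.neg.sub hint
  rw [neg_zero, zero_sub, neg_neg] at hlim
  refine hlim.congr' ?_
  filter_upwards [eventually_gt_atTop 0] with u hu
  rw [ein_eq_sub_integral hu, id]
  ring

theorem laguerre_succ_sub_one_div (n : ℕ) (x : ℝ) :
    (laguerre (n + 1) x - 1) / (n + 1) =
      ∑ k ∈ range (n + 1), (n.choose k : ℝ) * ((-x) ^ (k + 1) / ((k + 1) * (k + 1) ! : ℝ)) := by
  rw [laguerre, sum_range_succ']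
  simp only [pow_zero, Nat.choose_zero_right, Nat.cast_one, mul_one, Nat.factorial_zero, div_one,
    add_sub_cancel_right]
  rw [sum_div]
  refine sum_congr rfl fun k _ => ?_
  have hchoose := choose_succ_div_succ n k
  push_cast at hchoose
  rw [← div_div]
  linear_combination (-x) ^ (k + 1) / ((k + 1) ! : ℝ) * hchoose

theorem summable_norm_pow_div_mul_factorial_mul_pow (x : ℝ) {r : ℝ} (hr : 0 ≤ r) :
    Summable fun k : ℕ => ‖(-x) ^ (k + 1) / ((k + 1) * (k + 1) ! : ℝ)‖ * r ^ k := by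
  refine .of_nonneg_of_le (fun k => by positivity) (fun k => ?_)
    ((Real.summable_pow_div_factorial (|x| * r)).mul_left |x|)
  have hfact : (k ! : ℝ) ≤ (k + 1) * (k + 1) ! := by
    exact_mod_cast (Nat.factorial_le k.le_succ).trans (Nat.le_mul_of_pos_left _ k.succ_pos)
  calc ‖(-x) ^ (k + 1) / ((k + 1) * (k + 1) ! : ℝ)‖ * r ^ k
      = |x| * (|x| * r) ^ k / ((k + 1) * (k + 1) !) := by
        rw [norm_div, norm_pow, norm_neg, Real.norm_eq_abs, norm_of_nonneg (by positivity)]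
        ring
    _ ≤ |x| * (|x| * r) ^ k / k ! := by gcongr
    _ = |x| * ((|x| * r) ^ k / k !) := mul_div_assoc ..

theorem hasSum_laguerre_div_mul_pow (x : ℝ) {t : ℝ} (ht : |t| < 1) :
    HasSum (fun n : ℕ => laguerre n x / n * t ^ n) (-log (1 - t) - ein (x * t / (1 - t))) := by
  have heuler := (hasSum_eulerTransform (by simpa using ht)
    (summable_norm_pow_div_mul_factorial_mul_pow x
      (div_nonneg (norm_nonneg t) (sub_nonneg.2 ht.le)))).mul_left t
  have hein : t * ((1 - t)⁻¹ *
      ∑' k : ℕ, (-x) ^ (k + 1) / ((k + 1) * (k + 1) ! : ℝ) * (t / (1 - t)) ^ k) =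
      -ein (x * t / (1 - t)) := by
    rw [← (hasSum_ein _).tsum_eq, ← tsum_neg, ← mul_assoc, ← tsum_mul_left]
    refine tsum_congr fun k => ?_
    rw [neg_neg, show -(x * t / (1 - t)) = -x * (t / (1 - t)) by ring, mul_pow, pow_succ (t / _)]
    ring
  rw [hein] at heuler
  rw [← hasSum_nat_add_iff' 1]
  convert! (hasSum_pow_div_log_of_abs_lt_one ht).add heuler using 1
  · ext n
    rw [← laguerre_succ_sub_one_div]
    push_cast
    ring
  · simp [sub_eq_add_neg]

theorem tendsto_neg_log_one_sub_sub_ein {x : ℝ} (hx : 0 < x) :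
    Tendsto (fun t => -log (1 - t) - ein (x * t / (1 - t))) (𝓝[<] 1) (𝓝 (-γ - log x)) := by
  have hinv : Tendsto (fun t : ℝ => (1 - t)⁻¹) (𝓝[<] 1) atTop := by
    refine tendsto_inv_nhdsGT_zero.comp (tendsto_nhdsWithin_iff.2 ⟨?_, ?_⟩)
    · exact Continuous.tendsto' (by fun_prop) _ _ (by simp) |>.mono_left nhdsWithin_le_nhds
    · filter_upwards [self_mem_nhdsWithin] with t ht using sub_pos.2 (Set.mem_Iio.1 ht)
  have hnum : Tendsto (fun t => x * t) (𝓝[<] 1) (𝓝 x) :=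
    (Continuous.tendsto' (by fun_prop) _ _ (by simp)).mono_left nhdsWithin_le_nhds
  have hein := tendsto_ein_sub_log.comp (hnum.pos_mul_atTop hx hinv)
  refine (hein.neg.sub (hnum.log hx.ne')).congr' ?_
  filter_upwards [Ioo_mem_nhdsLT one_pos] with t ⟨ht0, ht1⟩
  have ht : 0 < 1 - t := sub_pos.2 ht1
  simp only [Function.comp, ← div_eq_mul_inv]
  rw [log_div (by positivity) ht.ne']
  ring

theorem laguerre_series_eulerMascheroni_general {x : ℝ} (hx : 0 < x) :
    Tendsto (fun N => ∑ n ∈ Finset.Icc 1 N, laguerre n x / (n : ℝ)) atTop (𝓝 (-γ - log x)) := by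
  obtain ⟨S, hS⟩ :=
    exists_tendsto_sum_inv_smul_of_isBigO_rpow one_half_lt_one (isBigO_sum_range_laguerre hx)
  simp only [smul_eq_mul, inv_mul_eq_div] at hS
  have habel : Tendsto (fun t => ∑' n : ℕ, laguerre n x / n * t ^ n) (𝓝[<] 1) (𝓝 (-γ - log x)) := by
    refine (tendsto_neg_log_one_sub_sub_ein hx).congr' ?_
    filter_upwards [Ioo_mem_nhdsLT (by norm_num : (-1 : ℝ) < 1)] with t ht
    exact (hasSum_laguerre_div_mul_pow x (abs_lt.2 ht)).tsum_eq.symm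
  have hS_eq : S = -γ - log x :=
    tendsto_nhds_unique (tendsto_tsum_powerSeries_nhdsWithin_lt hS) habel
  refine ((tendsto_add_atTop_iff_nat 1).2 (hS_eq ▸ hS)).congr fun N => ?_
  rw [range_eq_Ico, sum_eq_sum_Ico_succ_bot N.succ_pos]
  simp [Finset.Ico_add_one_right_eq_Icc]

theorem laguerre_series_eulerMascheroni :
    Filter.Tendsto (fun N => ∑ n ∈ Finset.Icc 1 N, laguerreOne n / (n : ℝ))
      Filter.atTop (nhds (-Real.eulerMascheroniConstant)) := by
  simpa using! laguerre_series_eulerMascheroni_general one_pos
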